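/- (Additive sewing lemma.) Let E be a Banach space, let ε > 0, n ≥ 1, and let a_i, b_i > 0 with a_i + b_i = 1+ε and C_i > 0 for i = 1, …, n. Let μ : ℝ × ℝ → E be a continuous map satisfying μ(t,t) = 0 for all t and ‖μ(s,t) − μ(s,u) − μ(u,t)‖ ≤ Σ_{i=1}^{n} C_i |t−u|^{a_i} |u−s|^{b_i} for all s, t, u ∈ ℝ. Then there exists a unique map φ : ℝ × ℝ → E such that φ(s,t) = φ(s,u) + φ(u,t) for all s, t, u ∈ ℝ and ‖φ(s,t) − μ(s,t)‖ ≤ C' |t−s|^{1+ε} for all s, t, with C' = 2^{1+ε} (Σ_{i=1}^{n} C_i) ζ(1+ε). Moreover, φ(s,t) is the limit of the Riemann-type sums Σ_{j=1}^{k} μ(t_{j-1}, t_j) as the mesh of the subdivision (s = t_0, t_1, …, t_k = t) tends to zero. -/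

import Mathlib

/-!
Write `θ = 1 + ε > 1` and `r = 2 ^ (1 - θ) < 1`. Replacing `μ(s,t)` by `μ(s,m) + μ(m,t)`, with `m`
the midpoint, over and over gives a sequence of continuous maps whose increments are at most
`(∑ C_i) 2 ^ (-θ) r ^ n |t - s| ^ θ`. It converges, locally uniformly, to a continuous `φ`
(`exists_midpoint_additive`) that is additive at midpoints and satisfies
`‖φ - μ‖ ≤ (∑ C_i) 2 ^ (-θ) / (1 - r) |t - s| ^ θ`, which is below the required bound because
`ζ(θ) (1 - r) ≥ 1 - 2 ^ (-θ)` (`zetaR_lower`).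

The key to additivity is a rigidity principle (`eq_zero_of_halving`): a quantity that splits into
two copies of itself at half the scale and is `O(|k| ^ θ)` vanishes. Applied to `φ(s,t) + φ(t,s)`
it gives antisymmetry; applied to the difference between `φ(s, s + p k)` and the sum of `φ` over the
`p` steps of length `k` it gives additivity at rational ratios, hence everywhere by continuity;
applied to `ψ - φ` it gives uniqueness. For a genuinely additive `φ`, convergence of the Riemann
sums follows by summing `‖φ - μ‖ ≤ C' |t_j - t_{j-1}| ^ θ ≤ C' mesh ^ ε |t_j - t_{j-1}|`.
-/

noncomputable section

/-- A subdivision `(t_0, …, t_k)` of the interval between `s` and `t`: a finite sequence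
with `t_0 = s`, `t_k = t`, arranged in increasing order if `s < t` and decreasing order
if `s > t`. -/
structure Subdivision (s t : ℝ) where
  k : ℕ
  pt : ℕ → ℝ
  k_pos : 0 < k
  first : pt 0 = s
  last : pt k = t
  mono_of_le : s ≤ t → ∀ i j, i ≤ j → j ≤ k → pt i ≤ pt j
  anti_of_ge : t ≤ s → ∀ i j, i ≤ j → j ≤ k → pt j ≤ pt i

/-- The mesh `max_{1 ≤ j ≤ k} |t_j - t_{j-1}|` of a subdivision. -/
def Subdivision.mesh {s t : ℝ} (I : Subdivision s t) : ℝ :=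
  ⨆ j : Fin I.k, |I.pt (j.1 + 1) - I.pt j.1|

/-- The value `ζ(x) = Σ_{ℓ ≥ 1} ℓ^{-x}` of the Riemann zeta function at a real `x`. -/
def zetaR (x : ℝ) : ℝ := ∑' m : ℕ, ((m : ℝ) + 1) ^ (-x)

/-! ### The rigidity principle -/

lemma two_rpow_one_sub_lt_one {θ : ℝ} (hθ : 1 < θ) : (2 : ℝ) ^ (1 - θ) < 1 :=
  Real.rpow_lt_one_of_one_lt_of_neg (by norm_num) (by linarith)

lemma two_mul_half_rpow {θ x : ℝ} (hx : 0 ≤ x) :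
    2 * (x / 2) ^ θ = (2 : ℝ) ^ (1 - θ) * x ^ θ := by
  rw [Real.div_rpow hx (by norm_num), Real.rpow_sub (by norm_num), Real.rpow_one]
  ring

lemma abs_half (k : ℝ) : |k / 2| = |k| / 2 := by
  rw [abs_div, abs_of_pos (by norm_num : (0 : ℝ) < 2)]

/-- Rigidity: a quantity of a base point and a step that splits into two copies of itself at half
the step and has order `θ > 1` in the step vanishes, since `2 ^ n` pieces of size `2 ^ (-n θ)` add
up to something negligible. -/
lemma eq_zero_of_halving {E : Type*} [NormedAddCommGroup E] {θ K : ℝ} (hθ : 1 < θ)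
    (D : ℝ → ℝ → E) (hD : ∀ s k, ∃ x y, D s k = D x (k / 2) + D y (k / 2))
    (hK : ∀ s k, ‖D s k‖ ≤ K * |k| ^ θ) (s k : ℝ) : D s k = 0 := by
  have key : ∀ n : ℕ, ∀ s k, ‖D s k‖ ≤ K * ((2 : ℝ) ^ (1 - θ)) ^ n * |k| ^ θ := by
    intro n
    induction n with
    | zero => intro s k; simpa using hK s k
    | succ n ih =>
      intro s k
      obtain ⟨x, y, h⟩ := hD s k
      have h1 := ih x (k / 2)
      have h2 := ih y (k / 2)
      rw [abs_half] at h1 h2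
      have h3 := two_mul_half_rpow (θ := θ) (abs_nonneg k)
      calc ‖D s k‖ ≤ ‖D x (k / 2)‖ + ‖D y (k / 2)‖ := by rw [h]; exact norm_add_le _ _
        _ ≤ K * ((2 : ℝ) ^ (1 - θ)) ^ n * (2 * (|k| / 2) ^ θ) := by linarith
        _ = _ := by rw [h3]; ring
  have hlim : Filter.Tendsto (fun n : ℕ => K * ((2 : ℝ) ^ (1 - θ)) ^ n * |k| ^ θ)
      Filter.atTop (nhds 0) := by
    have := ((tendsto_pow_atTop_nhds_zero_of_lt_one (by positivity)
      (two_rpow_one_sub_lt_one hθ)).const_mul K).mul_const (|k| ^ θ)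
    simpa using this
  exact norm_le_zero_iff.1 (ge_of_tendsto' hlim fun n => key n s k)

/-! ### A lower bound for the zeta series -/

/-- Pairing `2 m + 1` with `2 m + 2` in the zeta series, the even terms add up to `2 ^ (-θ) ζ(θ)`,
and the odd ones exceed them by at least the first difference `1 - 2 ^ (-θ)`. -/
lemma zetaR_lower {θ : ℝ} (hθ : 1 < θ) :
    1 - (2 : ℝ) ^ (-θ) ≤ zetaR θ * (1 - (2 : ℝ) ^ (1 - θ)) := by
  have hs : Summable fun m : ℕ => ((m : ℝ) + 1) ^ (-θ) := by
    have := (summable_nat_add_iff 1).2 (Real.summable_nat_rpow.2 (by linarith : -θ < -1))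
    simpa using this
  have he : Summable fun m : ℕ => (((2 * m : ℕ) : ℝ) + 1) ^ (-θ) :=
    hs.comp_injective (i := fun m : ℕ => 2 * m) fun a b h => by simpa using h
  have ho : Summable fun m : ℕ => (((2 * m + 1 : ℕ) : ℝ) + 1) ^ (-θ) :=
    hs.comp_injective (i := fun m : ℕ => 2 * m + 1) fun a b h => by simpa using h
  have hsum : ∑' m : ℕ, (((2 * m : ℕ) : ℝ) + 1) ^ (-θ)
      + ∑' m : ℕ, (((2 * m + 1 : ℕ) : ℝ) + 1) ^ (-θ) = ∑' m : ℕ, ((m : ℝ) + 1) ^ (-θ) :=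
    tsum_even_add_odd (f := fun m : ℕ => ((m : ℝ) + 1) ^ (-θ)) he ho
  have hodd : ∑' m : ℕ, (((2 * m + 1 : ℕ) : ℝ) + 1) ^ (-θ) = (2 : ℝ) ^ (-θ) * zetaR θ := by
    rw [zetaR, ← tsum_mul_left]
    refine tsum_congr fun m => ?_
    rw [← Real.mul_rpow (by norm_num) (by positivity)]
    push_cast
    ring_nf
  have hdiff : 1 - (2 : ℝ) ^ (-θ) ≤ ∑' m : ℕ, (((2 * m : ℕ) : ℝ) + 1) ^ (-θ)
      - ∑' m : ℕ, (((2 * m + 1 : ℕ) : ℝ) + 1) ^ (-θ) := by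
    rw [← he.tsum_sub ho]
    have hnn : ∀ m : ℕ, 0 ≤ (((2 * m : ℕ) : ℝ) + 1) ^ (-θ) - (((2 * m + 1 : ℕ) : ℝ) + 1) ^ (-θ) :=
      fun m => sub_nonneg.2
        (Real.rpow_le_rpow_of_nonpos (by positivity) (by push_cast; linarith) (by linarith))
    refine le_trans (le_of_eq ?_) ((he.sub ho).le_tsum 0 fun m _ => hnn m)
    norm_num
  have h2 : (2 : ℝ) ^ (1 - θ) = 2 * 2 ^ (-θ) := by
    rw [sub_eq_add_neg, Real.rpow_add (by norm_num), Real.rpow_one]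
  have hz : zetaR θ = ∑' m : ℕ, ((m : ℝ) + 1) ^ (-θ) := rfl
  rw [hodd, ← hz] at hsum
  rw [hodd] at hdiff
  rw [h2]
  clear hodd hz
  generalize ∑' m : ℕ, (((2 * m : ℕ) : ℝ) + 1) ^ (-θ) = e at hsum hdiff
  linarith

lemma two_rpow_div_le_zetaR {θ : ℝ} (hθ : 1 < θ) :
    (2 : ℝ) ^ (-θ) / (1 - (2 : ℝ) ^ (1 - θ)) ≤ 2 ^ θ * zetaR θ := by
  have h1 := two_rpow_one_sub_lt_one hθ
  have h2 := zetaR_lower hθ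
  have h3 : (2 : ℝ) ^ (1 - θ) = 2 * 2 ^ (-θ) := by
    rw [sub_eq_add_neg, Real.rpow_add (by norm_num), Real.rpow_one]
  have h4 : (1 : ℝ) ≤ 2 ^ θ := Real.one_le_rpow (by norm_num) (by linarith)
  have h5 : (0 : ℝ) < 2 ^ (-θ) := by positivity
  rw [div_le_iff₀ (by linarith)]
  nlinarith

/-! ### Dyadic refinement -/

/-- The `n`-th dyadic refinement of `μ`: the sum of `μ` over the `2 ^ n` equal steps from `s` to
`t`, defined by repeated bisection. -/
def dyadicSum {E : Type*} [Add E] (μ : ℝ → ℝ → E) : ℕ → ℝ → ℝ → E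
  | 0 => μ
  | n + 1 => fun s t => dyadicSum μ n s ((s + t) / 2) + dyadicSum μ n ((s + t) / 2) t

lemma continuous_dyadicSum {E : Type*} [NormedAddCommGroup E] {μ : ℝ → ℝ → E}
    (hcont : Continuous fun p : ℝ × ℝ => μ p.1 p.2) (n : ℕ) :
    Continuous fun p : ℝ × ℝ => dyadicSum μ n p.1 p.2 := by
  induction n with
  | zero => exact hcont
  | succ n ih =>
    have h1 : Continuous fun p : ℝ × ℝ => (p.1, (p.1 + p.2) / 2) := by fun_prop
    have h2 : Continuous fun p : ℝ × ℝ => ((p.1 + p.2) / 2, p.2) := by fun_prop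
    exact (ih.comp h1).add (ih.comp h2)

lemma dyadicSum_succ_sub_le {E : Type*} [NormedAddCommGroup E] {θ K : ℝ} {μ : ℝ → ℝ → E}
    (hmid : ∀ s t, ‖μ s t - μ s ((s + t) / 2) - μ ((s + t) / 2) t‖ ≤ K * |t - s| ^ θ)
    (n : ℕ) (s t : ℝ) : ‖dyadicSum μ n s t - dyadicSum μ (n + 1) s t‖
      ≤ K * |t - s| ^ θ * ((2 : ℝ) ^ (1 - θ)) ^ n := by
  induction n generalizing s t with
  | zero => simpa [dyadicSum, sub_sub] using hmid s t
  | succ n ih =>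
    have h1 := ih s ((s + t) / 2)
    have h2 := ih ((s + t) / 2) t
    rw [show (s + t) / 2 - s = (t - s) / 2 by ring, abs_half] at h1
    rw [show t - (s + t) / 2 = (t - s) / 2 by ring, abs_half] at h2
    have h3 := two_mul_half_rpow (θ := θ) (abs_nonneg (t - s))
    calc ‖dyadicSum μ (n + 1) s t - dyadicSum μ (n + 2) s t‖
        = ‖(dyadicSum μ n s ((s + t) / 2) - dyadicSum μ (n + 1) s ((s + t) / 2))
          + (dyadicSum μ n ((s + t) / 2) t - dyadicSum μ (n + 1) ((s + t) / 2) t)‖ := by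
          congr 1
          change (dyadicSum μ n s ((s + t) / 2) + dyadicSum μ n ((s + t) / 2) t)
            - (dyadicSum μ (n + 1) s ((s + t) / 2) + dyadicSum μ (n + 1) ((s + t) / 2) t) = _
          abel
      _ ≤ K * (2 * (|t - s| / 2) ^ θ) * ((2 : ℝ) ^ (1 - θ)) ^ n :=
          (norm_add_le _ _).trans (by linarith)
      _ = _ := by rw [h3]; ring

lemma exists_midpoint_additive {E : Type*} [NormedAddCommGroup E] [CompleteSpace E] {θ K : ℝ}
    (hθ : 1 < θ) {μ : ℝ → ℝ → E} (hcont : Continuous fun p : ℝ × ℝ => μ p.1 p.2)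
    (hmid : ∀ s t, ‖μ s t - μ s ((s + t) / 2) - μ ((s + t) / 2) t‖ ≤ K * |t - s| ^ θ) :
    ∃ φ : ℝ → ℝ → E, (Continuous fun p : ℝ × ℝ => φ p.1 p.2) ∧
      (∀ s t, φ s t = φ s ((s + t) / 2) + φ ((s + t) / 2) t) ∧
      ∀ s t, ‖φ s t - μ s t‖ ≤ K / (1 - (2 : ℝ) ^ (1 - θ)) * |t - s| ^ θ := by
  set r : ℝ := (2 : ℝ) ^ (1 - θ) with hr
  have hr0 : 0 ≤ r := by positivity
  have hr1 : r < 1 := two_rpow_one_sub_lt_one hθ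
  have hstep : ∀ s t n, dist (dyadicSum μ n s t) (dyadicSum μ (n + 1) s t)
      ≤ K * |t - s| ^ θ * r ^ n := fun s t n => by
    rw [dist_eq_norm]; exact dyadicSum_succ_sub_le hmid n s t
  choose φ hφ using fun s t =>
    cauchySeq_tendsto_of_complete (cauchySeq_of_le_geometric r _ hr1 (hstep s t))
  have hrate : ∀ s t n, dist (dyadicSum μ n s t) (φ s t) ≤ K * |t - s| ^ θ * r ^ n / (1 - r) :=
    fun s t n => dist_le_of_le_geometric_of_tendsto r _ hr1 (hstep s t) (hφ s t) n
  refine ⟨φ, ?_, fun s t => ?_, fun s t => ?_⟩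
  · have hloc : TendstoLocallyUniformly (fun n (p : ℝ × ℝ) => dyadicSum μ n p.1 p.2)
        (fun p => φ p.1 p.2) Filter.atTop := by
      rw [Metric.tendstoLocallyUniformly_iff]
      intro η hη p
      have hc : ContinuousAt (fun q : ℝ × ℝ => K * |q.2 - q.1| ^ θ) p := by
        have : Continuous fun q : ℝ × ℝ => K * |q.2 - q.1| ^ θ :=
          continuous_const.mul
            ((by fun_prop : Continuous fun q : ℝ × ℝ => |q.2 - q.1|).rpow_const
              fun _ => Or.inr (by linarith))
        exact this.continuousAt
      set B := K * |p.2 - p.1| ^ θ + 1 with hB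
      refine ⟨_, hc.eventually_lt continuousAt_const (lt_add_one _ : _ < B), ?_⟩
      have hlim : Filter.Tendsto (fun n : ℕ => B * r ^ n / (1 - r)) Filter.atTop (nhds 0) := by
        simpa using ((tendsto_pow_atTop_nhds_zero_of_lt_one hr0 hr1).const_mul B).div_const (1 - r)
      filter_upwards [hlim.eventually_lt_const hη] with n hn q hq
      have hq' : K * |q.2 - q.1| ^ θ ≤ B := le_of_lt hq
      rw [dist_comm]
      refine ((hrate q.1 q.2 n).trans ?_).trans_lt hn
      have : 0 < 1 - r := by linarith
      gcongr
    exact hloc.continuous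
      (Filter.Eventually.of_forall fun n => continuous_dyadicSum hcont n).frequently
  · exact tendsto_nhds_unique ((Filter.tendsto_add_atTop_iff_nat 1).2 (hφ s t))
      ((hφ s ((s + t) / 2)).add (hφ ((s + t) / 2) t))
  · have := hrate s t 0
    rw [dist_comm, dist_eq_norm] at this
    refine this.trans (le_of_eq ?_)
    simp
    ring

/-! ### From midpoint additivity to additivity -/

/-- Along a fixed number of equal steps `k`, the defect of additivity of `μ` is `O(|k| ^ θ)`; the
dependence of the constant on the number of steps is irrelevant to the rigidity principle. -/
lemma exists_steps_bound {E : Type*} [NormedAddCommGroup E] {θ : ℝ} {n : ℕ} {a b C : Fin n → ℝ}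
    (ha : ∀ i, 0 < a i) (hb : ∀ i, 0 < b i) (hab : ∀ i, a i + b i = θ)
    {μ : ℝ → ℝ → E} (hdiag : ∀ t, μ t t = 0)
    (hest : ∀ s t u : ℝ,
      ‖μ s t - μ s u - μ u t‖ ≤ ∑ i, C i * |t - u| ^ a i * |u - s| ^ b i) (p : ℕ) :
    ∃ K : ℝ, ∀ s k : ℝ, ‖μ s (s + p * k)
      - ∑ j ∈ Finset.range p, μ (s + j * k) (s + (j + 1) * k)‖ ≤ K * |k| ^ θ := by
  induction p with
  | zero => exact ⟨0, fun s k => by simp [hdiag]⟩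
  | succ p ih =>
    obtain ⟨K, hK⟩ := ih
    refine ⟨K + ∑ i, C i * (p : ℝ) ^ b i, fun s k => ?_⟩
    have h1 := hest s (s + (p + 1) * k) (s + p * k)
    have h2 : ∑ i, C i * |s + (p + 1) * k - (s + p * k)| ^ a i * |s + p * k - s| ^ b i
        = (∑ i, C i * (p : ℝ) ^ b i) * |k| ^ θ := by
      rw [Finset.sum_mul]
      refine Finset.sum_congr rfl fun i _ => ?_
      rw [show s + (p + 1) * k - (s + p * k) = k by ring, show s + p * k - s = p * k by ring,
        abs_mul, Nat.abs_cast, Real.mul_rpow (by positivity) (abs_nonneg _), ← hab i,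
        Real.rpow_add_of_nonneg (abs_nonneg _) (ha i).le (hb i).le]
      ring
    rw [h2] at h1
    rw [Finset.sum_range_succ]
    push_cast
    calc _ = ‖(μ s (s + p * k) - ∑ j ∈ Finset.range p, μ (s + j * k) (s + (j + 1) * k))
          + (μ s (s + (p + 1) * k) - μ s (s + p * k) - μ (s + p * k) (s + (p + 1) * k))‖ := by
          congr 1; abel
      _ ≤ _ := (norm_add_le _ _).trans ((add_le_add (hK s k) h1).trans_eq (by ring))

/-- A midpoint-additive map is unchanged when split into equal steps: both sides split in two at
half the step, so the rigidity principle applies to their difference. -/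
lemma eq_sum_steps {E : Type*} [NormedAddCommGroup E] {θ L : ℝ} (hθ : 1 < θ)
    {μ φ : ℝ → ℝ → E}
    (hmid : ∀ s t, φ s t = φ s ((s + t) / 2) + φ ((s + t) / 2) t)
    (hφμ : ∀ s t, ‖φ s t - μ s t‖ ≤ L * |t - s| ^ θ) (p : ℕ)
    (hp : ∃ K : ℝ, ∀ s k : ℝ, ‖μ s (s + p * k)
      - ∑ j ∈ Finset.range p, μ (s + j * k) (s + (j + 1) * k)‖ ≤ K * |k| ^ θ) (s k : ℝ) :
    φ s (s + p * k) = ∑ j ∈ Finset.range p, φ (s + j * k) (s + (j + 1) * k) := by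
  obtain ⟨K, hK⟩ := hp
  have key := eq_zero_of_halving (K := L * (p : ℝ) ^ θ + K + p * L) hθ
    (fun s k => φ s (s + p * k) - ∑ j ∈ Finset.range p, φ (s + j * k) (s + (j + 1) * k)) ?_ ?_ s k
  · exact sub_eq_zero.1 key
  · intro s k
    refine ⟨s, s + p * (k / 2), ?_⟩
    have h1 : φ s (s + p * k) = φ s (s + p * (k / 2))
        + φ (s + p * (k / 2)) (s + p * (k / 2) + p * (k / 2)) := by
      rw [hmid s (s + p * k)]
      ring_nf
    have h2 : ∑ j ∈ Finset.range p, φ (s + j * k) (s + (j + 1) * k)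
        = ∑ j ∈ Finset.range (2 * p), φ (s + j * (k / 2)) (s + (j + 1) * (k / 2)) := by
      clear h1 hK
      induction p with
      | zero => simp
      | succ p ih =>
        rw [Finset.sum_range_succ, ih, show 2 * (p + 1) = 2 * p + 1 + 1 by ring,
          Finset.sum_range_succ, Finset.sum_range_succ, hmid (s + p * k)]
        push_cast
        ring_nf
        exact (add_assoc _ _ _).symm
    have h3 : ∑ j ∈ Finset.range (2 * p), φ (s + j * (k / 2)) (s + (j + 1) * (k / 2))
        = ∑ j ∈ Finset.range p, φ (s + j * (k / 2)) (s + (j + 1) * (k / 2))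
          + ∑ j ∈ Finset.range p, φ (s + p * (k / 2) + j * (k / 2))
              (s + p * (k / 2) + (j + 1) * (k / 2)) := by
      rw [two_mul, Finset.sum_range_add]
      congr 1
      refine Finset.sum_congr rfl fun j _ => ?_
      push_cast
      ring_nf
    simp only [h1, h2, h3]
    abel
  · intro s k
    have h1 := hφμ s (s + p * k)
    rw [add_sub_cancel_left, abs_mul, Nat.abs_cast,
      Real.mul_rpow (by positivity) (abs_nonneg _)] at h1
    have h2 : ‖∑ j ∈ Finset.range p, (φ (s + j * k) (s + (j + 1) * k)
        - μ (s + j * k) (s + (j + 1) * k))‖ ≤ p * (L * |k| ^ θ) := by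
      refine (norm_sum_le_of_le _ (n := fun _ : ℕ => L * |k| ^ θ) fun j _ => ?_).trans
        (le_of_eq (by simp))
      have := hφμ (s + j * k) (s + (j + 1) * k)
      rwa [show s + (j + 1) * k - (s + j * k) = k by ring] at this
    have h3 := hK s k
    calc _ = ‖(φ s (s + p * k) - μ s (s + p * k))
          + (μ s (s + p * k) - ∑ j ∈ Finset.range p, μ (s + j * k) (s + (j + 1) * k))
          - ∑ j ∈ Finset.range p, (φ (s + j * k) (s + (j + 1) * k)
            - μ (s + j * k) (s + (j + 1) * k))‖ := by
          rw [Finset.sum_sub_distrib]; congr 1; abel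
      _ ≤ _ := (norm_sub_le _ _).trans (add_le_add (norm_add_le _ _) le_rfl)
      _ ≤ _ := by linarith

/-- Additivity over equal steps gives additivity at nonnegative rational increments, and continuity
extends it to all nonnegative increments; absolute values let the density of `ℚ` in `ℝ` be used. -/
lemma additive_of_steps {E : Type*} [NormedAddCommGroup E] {φ : ℝ → ℝ → E}
    (hcont : Continuous fun p : ℝ × ℝ => φ p.1 p.2)
    (hsteps : ∀ (p : ℕ) (s k : ℝ),
      φ s (s + p * k) = ∑ j ∈ Finset.range p, φ (s + j * k) (s + (j + 1) * k))
    {s u t : ℝ} (hsu : s ≤ u) (hut : u ≤ t) : φ s t = φ s u + φ u t := by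
  have hnat : ∀ (p q : ℕ) (k : ℝ), φ s (s + p * k + q * k)
      = φ s (s + p * k) + φ (s + p * k) (s + p * k + q * k) := by
    intro p q k
    rw [hsteps p, hsteps q, show s + p * k + q * k = s + (p + q : ℕ) * k by push_cast; ring,
      hsteps (p + q), Finset.sum_range_add]
    congr 1
    refine Finset.sum_congr rfl fun j _ => ?_
    push_cast
    ring_nf
  have hrat : ∀ x y : ℚ, φ s (s + |(x : ℝ)| + |(y : ℝ)|)
      = φ s (s + |(x : ℝ)|) + φ (s + |(x : ℝ)|) (s + |(x : ℝ)| + |(y : ℝ)|) := by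
    intro x y
    have hx : |(x : ℝ)| = (x.num.natAbs * y.den : ℕ) * (1 / (x.den * y.den : ℝ)) := by
      have h1 : (x.den : ℝ) ≠ 0 := by exact_mod_cast x.den_nz
      have h2 : (y.den : ℝ) ≠ 0 := by exact_mod_cast y.den_nz
      conv_lhs => rw [Rat.cast_def]
      rw [abs_div, Nat.abs_cast]
      push_cast [Nat.cast_natAbs]
      field_simp
    have hy : |(y : ℝ)| = (y.num.natAbs * x.den : ℕ) * (1 / (x.den * y.den : ℝ)) := by
      have h1 : (x.den : ℝ) ≠ 0 := by exact_mod_cast x.den_nz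
      have h2 : (y.den : ℝ) ≠ 0 := by exact_mod_cast y.den_nz
      conv_lhs => rw [Rat.cast_def]
      rw [abs_div, Nat.abs_cast]
      push_cast [Nat.cast_natAbs]
      field_simp
    rw [hx, hy]
    exact hnat _ _ _
  have hreal : (fun z : ℝ × ℝ => φ s (s + |z.1| + |z.2|))
      = fun z => φ s (s + |z.1|) + φ (s + |z.1|) (s + |z.1| + |z.2|) := by
    have hd : DenseRange (Prod.map ((↑) : ℚ → ℝ) ((↑) : ℚ → ℝ)) :=
      Rat.denseRange_cast.prodMap Rat.denseRange_cast
    refine hd.equalizer ?_ ?_ (funext fun z => hrat z.1 z.2)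
    · exact hcont.comp (by fun_prop : Continuous fun z : ℝ × ℝ => (s, s + |z.1| + |z.2|))
    · exact (hcont.comp (by fun_prop : Continuous fun z : ℝ × ℝ => (s, s + |z.1|))).add
        (hcont.comp (by fun_prop : Continuous fun z : ℝ × ℝ => (s + |z.1|, s + |z.1| + |z.2|)))
  have h := congrFun hreal (u - s, t - u)
  simp only [abs_of_nonneg (sub_nonneg.2 hsu), abs_of_nonneg (sub_nonneg.2 hut)] at h
  simpa using h

lemma additive_of_le_of_antisymm {E : Type*} [AddCommGroup E] {φ : ℝ → ℝ → E}
    (hanti : ∀ s t, φ t s = -φ s t)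
    (hle : ∀ s u t, s ≤ u → u ≤ t → φ s t = φ s u + φ u t) (s t u : ℝ) :
    φ s t = φ s u + φ u t := by
  rcases le_total s u with h1 | h1 <;> rcases le_total u t with h2 | h2 <;>
    rcases le_total s t with h3 | h3
  · exact hle _ _ _ h1 h2
  · exact hle _ _ _ h1 h2
  · rw [hle _ _ _ h3 h2, hanti t u]; abel
  · rw [hanti t u, hanti t s, hle _ _ _ h3 h1]; abel
  · rw [hle _ _ _ h1 h3, hanti u s]; abel
  · rw [hanti t s, hanti u s, hle _ _ _ h2 h3]; abel
  · rw [hanti t s, hanti u s, hanti t u, hle _ _ _ h2 h1]; abel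
  · rw [hanti t s, hanti u s, hanti t u, hle _ _ _ h2 h1]; abel

/-! ### Riemann sums -/

lemma Subdivision.sum_abs {s t : ℝ} (I : Subdivision s t) :
    ∑ j ∈ Finset.range I.k, |I.pt (j + 1) - I.pt j| = |t - s| := by
  have htel := Finset.sum_range_sub I.pt I.k
  rw [I.first, I.last] at htel
  rcases le_total s t with h | h
  · rw [abs_of_nonneg (sub_nonneg.2 h), ← htel]
    refine Finset.sum_congr rfl fun j hj => abs_of_nonneg (sub_nonneg.2 ?_)
    exact I.mono_of_le h _ _ (Nat.le_succ j) (Finset.mem_range.1 hj)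
  · rw [abs_of_nonpos (sub_nonpos.2 h), ← htel, ← Finset.sum_neg_distrib]
    refine Finset.sum_congr rfl fun j hj => abs_of_nonpos (sub_nonpos.2 ?_)
    exact I.anti_of_ge h _ _ (Nat.le_succ j) (Finset.mem_range.1 hj)

lemma Subdivision.abs_le_mesh {s t : ℝ} (I : Subdivision s t) {j : ℕ} (hj : j < I.k) :
    |I.pt (j + 1) - I.pt j| ≤ I.mesh :=
  le_ciSup (f := fun j : Fin I.k => |I.pt (j.1 + 1) - I.pt j.1|)
    (Set.finite_range _).bddAbove ⟨j, hj⟩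

lemma Subdivision.riemann_sum_sub_le {E : Type*} [NormedAddCommGroup E] {ε L : ℝ} (hε : 0 < ε)
    (hL : 0 ≤ L) {μ φ : ℝ → ℝ → E} (hadd : ∀ s t u, φ s t = φ s u + φ u t)
    (hφμ : ∀ s t, ‖φ s t - μ s t‖ ≤ L * |t - s| ^ (1 + ε)) {s t δ : ℝ} (I : Subdivision s t)
    (hI : I.mesh ≤ δ) :
    ‖(∑ j ∈ Finset.range I.k, μ (I.pt j) (I.pt (j + 1))) - φ s t‖ ≤ L * |t - s| * δ ^ ε := by
  have htel : ∀ k : ℕ, φ (I.pt 0) (I.pt k) = ∑ j ∈ Finset.range k, φ (I.pt j) (I.pt (j + 1)) := by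
    intro k
    induction k with
    | zero => simpa using hadd (I.pt 0) (I.pt 0) (I.pt 0)
    | succ k ih => rw [Finset.sum_range_succ, ← ih]; exact hadd _ _ _
  have h := htel I.k
  rw [I.first, I.last] at h
  rw [h, ← Finset.sum_sub_distrib, ← I.sum_abs, Finset.mul_sum, Finset.sum_mul]
  refine norm_sum_le_of_le _ fun j hj => ?_
  rw [norm_sub_rev]
  refine (hφμ _ _).trans ?_
  rw [Real.rpow_add_of_nonneg (abs_nonneg _) zero_le_one hε.le, Real.rpow_one, ← mul_assoc]
  have h1 := (I.abs_le_mesh (Finset.mem_range.1 hj)).trans hI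
  gcongr

/-! ### The sewing lemma -/

/-- Additive sewing lemma: if `μ : ℝ × ℝ → E` is continuous into a Banach space, with
`μ(t,t) = 0` and `‖μ(s,t) − μ(s,u) − μ(u,t)‖ ≤ Σ_i C_i |t−u|^{a_i}|u−s|^{b_i}` where
`a_i + b_i = 1 + ε`, then there is a unique `φ : ℝ × ℝ → E` with
`φ(s,t) = φ(s,u) + φ(u,t)` and `‖φ(s,t) − μ(s,t)‖ ≤ C'|t−s|^{1+ε}`,
`C' = 2^{1+ε}(Σ_i C_i)ζ(1+ε)`; moreover `φ(s,t)` is the limit of the Riemann-type sums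
`Σ_j μ(t_{j-1}, t_j)` as the mesh of the subdivision tends to zero. -/
theorem stmt11 {E : Type*} [NormedAddCommGroup E] [NormedSpace ℝ E] [CompleteSpace E]
    (ε : ℝ) (hε : 0 < ε) (n : ℕ) (hn : 1 ≤ n) (a b C : Fin n → ℝ)
    (ha : ∀ i, 0 < a i) (hb : ∀ i, 0 < b i) (hab : ∀ i, a i + b i = 1 + ε)
    (hC : ∀ i, 0 < C i)
    (μ : ℝ → ℝ → E) (hcont : Continuous fun p : ℝ × ℝ => μ p.1 p.2)
    (hdiag : ∀ t, μ t t = 0)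
    (hest : ∀ s t u : ℝ,
      ‖μ s t - μ s u - μ u t‖ ≤ ∑ i, C i * |t - u| ^ a i * |u - s| ^ b i) :
    ∃ φ : ℝ → ℝ → E,
      ((∀ s t u : ℝ, φ s t = φ s u + φ u t) ∧
        (∀ s t : ℝ, ‖φ s t - μ s t‖ ≤
          2 ^ (1 + ε) * (∑ i, C i) * zetaR (1 + ε) * |t - s| ^ (1 + ε))) ∧
      (∀ ψ : ℝ → ℝ → E,
        ((∀ s t u : ℝ, ψ s t = ψ s u + ψ u t) ∧
          (∀ s t : ℝ, ‖ψ s t - μ s t‖ ≤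
            2 ^ (1 + ε) * (∑ i, C i) * zetaR (1 + ε) * |t - s| ^ (1 + ε))) → ψ = φ) ∧
      (∀ s t : ℝ, ∀ η > (0 : ℝ), ∃ δ > (0 : ℝ), ∀ I : Subdivision s t,
        I.mesh < δ →
          ‖(∑ j ∈ Finset.range I.k, μ (I.pt j) (I.pt (j + 1))) - φ s t‖ < η) := by
  set F := ∑ i, C i with hF
  set L := 2 ^ (1 + ε) * F * zetaR (1 + ε) with hLdef
  have hθ : 1 < 1 + ε := by linarith
  have hF0 : 0 ≤ F := Finset.sum_nonneg fun i _ => (hC i).le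
  have hz0 : 0 ≤ zetaR (1 + ε) := tsum_nonneg fun m => by positivity
  have hL0 : 0 ≤ L := by positivity
  have hmid : ∀ s t, ‖μ s t - μ s ((s + t) / 2) - μ ((s + t) / 2) t‖
      ≤ F * 2 ^ (-(1 + ε)) * |t - s| ^ (1 + ε) := by
    intro s t
    refine (hest s t ((s + t) / 2)).trans (le_of_eq ?_)
    rw [hF, Finset.sum_mul, Finset.sum_mul]
    refine Finset.sum_congr rfl fun i _ => ?_
    rw [show (s + t) / 2 - s = (t - s) / 2 by ring, show t - (s + t) / 2 = (t - s) / 2 by ring,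
      abs_half, mul_assoc, ← Real.rpow_add_of_nonneg (by positivity) (ha i).le (hb i).le, hab i,
      Real.div_rpow (abs_nonneg _) (by norm_num), Real.rpow_neg (by norm_num)]
    ring
  obtain ⟨φ, hφc, hφmid, hφ⟩ := exists_midpoint_additive hθ hcont hmid
  have hφμ : ∀ s t, ‖φ s t - μ s t‖ ≤ L * |t - s| ^ (1 + ε) := by
    intro s t
    refine (hφ s t).trans (mul_le_mul_of_nonneg_right ?_ (by positivity))
    have := mul_le_mul_of_nonneg_left (two_rpow_div_le_zetaR hθ) hF0
    rw [hLdef, mul_div_assoc]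
    linarith
  have hsteps := fun p =>
    eq_sum_steps hθ hφmid hφμ p (exists_steps_bound ha hb hab hdiag hest p)
  have hanti : ∀ s t, φ t s = -φ s t := by
    intro s t
    have key := eq_zero_of_halving (K := L + L + F) hθ (fun s k => φ (s + k) s + φ s (s + k))
      ?_ ?_ s (t - s)
    · simp only [add_sub_cancel] at key
      exact eq_neg_of_add_eq_zero_left key
    · intro s k
      refine ⟨s, s + k / 2, ?_⟩
      simp only [hφmid (s + k) s, hφmid s (s + k), show (s + k + s) / 2 = s + k / 2 by ring,
        show (s + (s + k)) / 2 = s + k / 2 by ring, show s + k / 2 + k / 2 = s + k by ring]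
      abel
    · intro s k
      have h1 := hφμ (s + k) s
      have h2 := hφμ s (s + k)
      have h3 := hest s s (s + k)
      have h4 : ∑ i, C i * |s - (s + k)| ^ a i * |s + k - s| ^ b i = F * |k| ^ (1 + ε) := by
        rw [hF, Finset.sum_mul]
        refine Finset.sum_congr rfl fun i _ => ?_
        rw [show s - (s + k) = -k by ring, add_sub_cancel_left, abs_neg, mul_assoc,
          ← Real.rpow_add_of_nonneg (abs_nonneg _) (ha i).le (hb i).le, hab i]
      rw [h4, hdiag] at h3
      rw [show s - (s + k) = -k by ring, abs_neg] at h1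
      rw [add_sub_cancel_left] at h2
      calc _ = ‖(φ (s + k) s - μ (s + k) s) + (φ s (s + k) - μ s (s + k))
            - (0 - μ s (s + k) - μ (s + k) s)‖ := by congr 1; abel
        _ ≤ _ := (norm_sub_le _ _).trans (add_le_add (norm_add_le _ _) le_rfl)
        _ ≤ _ := by linarith
  have hadd : ∀ s t u, φ s t = φ s u + φ u t :=
    additive_of_le_of_antisymm hanti fun s u t h1 h2 => additive_of_steps hφc hsteps h1 h2
  refine ⟨φ, ⟨hadd, hφμ⟩, ?_, ?_⟩
  · rintro ψ ⟨hψadd, hψμ⟩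
    funext s t
    have key := eq_zero_of_halving (K := L + L) hθ (fun s k => ψ s (s + k) - φ s (s + k))
      ?_ ?_ s (t - s)
    · simp only [add_sub_cancel] at key
      exact sub_eq_zero.1 key
    · intro s k
      refine ⟨s, s + k / 2, ?_⟩
      simp only [hadd s (s + k) (s + k / 2), hψadd s (s + k) (s + k / 2),
        show s + k / 2 + k / 2 = s + k by ring]
      abel
    · intro s k
      have h1 := hψμ s (s + k)
      have h2 := hφμ s (s + k)
      rw [add_sub_cancel_left] at h1 h2
      calc _ = ‖(ψ s (s + k) - μ s (s + k)) - (φ s (s + k) - μ s (s + k))‖ := by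
            congr 1; abel
        _ ≤ _ := norm_sub_le _ _
        _ ≤ _ := by linarith
  · intro s t η hη
    -- The bound `A * δ ^ ε` on the error is below `η` when `δ ^ ε = η / (A + 1)`.
    set A := L * |t - s| with hA
    have hA0 : 0 ≤ A := by positivity
    refine ⟨(η / (A + 1)) ^ (1 / ε), by positivity, fun I hI => ?_⟩
    refine (I.riemann_sum_sub_le hε hL0 hadd hφμ hI.le).trans_lt ?_
    rw [← Real.rpow_mul (by positivity), one_div_mul_cancel hε.ne', Real.rpow_one, ← hA,
      mul_div_assoc', div_lt_iff₀ (by positivity)]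
    nlinarith
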